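/- arXiv:2604.10203 — 2 statements merged into one kernel-verified Lean document; each statement's English description precedes it below -/
import Mathlib

section
/- Let K ≥ 1, let G : Fin K → ℝ be positive, and let P > 0. For every feasible power allocation P : Fin K → ℝ (i.e., P_k ≥ 0 for all k and ∑_{k=1}^K P_k ≤ P), the minimum weighted power satisfies min_{k} P_k · G_k ≤ P / (∑_{j=1}^K 1/G_j). Consequently the optimal value of the max-min power allocation problem for a fixed beamformer is t* = P / (∑_{j=1}^K 1/G_j). -/
section Semifield

variable {ι 𝕜 : Type*} [Semifield 𝕜]

/-- The channel-inversion power allocation: the budget `P` is shared among the users in inverse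
proportion to their gains `G`, so that all users attain the same value `P_k G_k`. -/
def channelInversion [Fintype ι] (G : ι → 𝕜) (P : 𝕜) (k : ι) : 𝕜 :=
  P / (∑ j, 1 / G j) * (1 / G k)

lemma channelInversion_mul_gain [Fintype ι] {G : ι → 𝕜} (P : 𝕜) {k : ι} (hk : G k ≠ 0) :
    channelInversion G P k * G k = P / ∑ j, 1 / G j := by
  rw [channelInversion, mul_assoc, one_div_mul_cancel hk, mul_one]

lemma sum_channelInversion [Fintype ι] {G : ι → 𝕜} (P : 𝕜) (hG : ∑ j, 1 / G j ≠ 0) :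
    ∑ k, channelInversion G P k = P := by
  simp only [channelInversion]
  rw [← Finset.mul_sum, div_mul_cancel₀ P hG]

variable [LinearOrder 𝕜] [IsStrictOrderedRing 𝕜]

lemma channelInversion_nonneg [Fintype ι] {G : ι → 𝕜} {P : 𝕜} (hG : ∀ k, 0 ≤ G k) (hP : 0 ≤ P)
    (k : ι) : 0 ≤ channelInversion G P k :=
  mul_nonneg (div_nonneg hP (Finset.sum_nonneg fun j _ => one_div_nonneg.mpr (hG j)))
    (one_div_nonneg.mpr (hG k))

lemma sum_one_div_pos {s : Finset ι} (hs : s.Nonempty) {G : ι → 𝕜} (hG : ∀ k ∈ s, 0 < G k) :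
    0 < ∑ k ∈ s, 1 / G k :=
  Finset.sum_pos (fun k hk => one_div_pos.mpr (hG k hk)) hs

lemma mul_sum_one_div_le_sum {s : Finset ι} {G p : ι → 𝕜} {t : 𝕜} (hG : ∀ k ∈ s, 0 < G k)
    (ht : ∀ k ∈ s, t ≤ p k * G k) : t * ∑ k ∈ s, 1 / G k ≤ ∑ k ∈ s, p k := by
  rw [Finset.mul_sum]
  refine Finset.sum_le_sum fun k hk => ?_
  rw [mul_one_div]
  exact (div_le_iff₀ (hG k hk)).mpr (ht k hk)

end Semifield

section Real

variable {ι : Type*} [Fintype ι] [Nonempty ι] {G : ι → ℝ}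

lemma iInf_mul_le_div_sum_one_div (hG : ∀ k, 0 < G k) {p : ι → ℝ} {P : ℝ} (hp : ∑ k, p k ≤ P) :
    ⨅ k, p k * G k ≤ P / ∑ j, 1 / G j := by
  rw [le_div_iff₀ (sum_one_div_pos Finset.univ_nonempty fun k _ => hG k)]
  calc (⨅ k, p k * G k) * ∑ j, 1 / G j
      ≤ ∑ k, p k := mul_sum_one_div_le_sum (fun k _ => hG k)
        fun k _ => ciInf_le (Set.finite_range _).bddBelow k
    _ ≤ P := hp

lemma iInf_channelInversion_mul_gain (hG : ∀ k, G k ≠ 0) (P : ℝ) :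
    ⨅ k, channelInversion G P k * G k = P / ∑ j, 1 / G j := by
  simp only [channelInversion_mul_gain P (hG _), ciInf_const]

theorem stmt_1_general (hG : ∀ k, 0 < G k) {P : ℝ} (hP : 0 ≤ P) :
    (∀ p : ι → ℝ, ∑ k, p k ≤ P → ⨅ k, p k * G k ≤ P / ∑ j, 1 / G j) ∧
    IsGreatest {t : ℝ | ∃ p : ι → ℝ, (∀ k, 0 ≤ p k) ∧ ∑ k, p k ≤ P ∧ ⨅ k, p k * G k = t}
      (P / ∑ j, 1 / G j) := by
  have sum_pos : 0 < ∑ j, 1 / G j := sum_one_div_pos Finset.univ_nonempty fun k _ => hG k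
  refine ⟨fun p => iInf_mul_le_div_sum_one_div hG, ⟨channelInversion G P, ?nonneg, ?budget, ?value⟩,
    ?upper⟩
  case nonneg => exact channelInversion_nonneg (fun k => (hG k).le) hP
  case budget => exact (sum_channelInversion P sum_pos.ne').le
  case value => exact iInf_channelInversion_mul_gain (fun k => (hG k).ne') P
  case upper =>
    rintro _ ⟨p, -, hp, rfl⟩
    exact iInf_mul_le_div_sum_one_div hG hp

end Real

/-- For positive gains `G` and power budget `P > 0`, every feasible power
allocation (`P_k ≥ 0`, `∑ P_k ≤ P`) satisfies `min_k P_k G_k ≤ P / (∑_j 1/G_j)`;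
consequently the optimal value of the max-min power allocation problem is
`t* = P / (∑_j 1/G_j)`. -/
theorem stmt_1 (K : ℕ) (hK : 1 ≤ K) (G : Fin K → ℝ) (hG : ∀ k, 0 < G k)
    (P : ℝ) (hP : 0 < P) :
    (∀ Pw : Fin K → ℝ, (∀ k, 0 ≤ Pw k) → (∑ k, Pw k ≤ P) →
      (⨅ k, Pw k * G k) ≤ P / (∑ j, 1 / G j)) ∧
    IsGreatest {t : ℝ | ∃ Pw : Fin K → ℝ, (∀ k, 0 ≤ Pw k) ∧ (∑ k, Pw k ≤ P) ∧
      (⨅ k, Pw k * G k) = t} (P / (∑ j, 1 / G j)) := by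
  have : Nonempty (Fin K) := ⟨⟨0, hK⟩⟩
  exact (stmt_1_general hG hP.le).imp_left fun bound Pw _ => bound Pw
end

section
/- Let h_1, …, h_K ∈ ℂ^N be channel vectors, let R_k = Re(h_k h_kᴴ) (the entrywise real part of the rank-one Hermitian matrix h_k h_kᴴ), and set R = ∑_{k=1}^K R_k. Let w ∈ {−1,+1}^N and suppose wᵀ R_k w > 0 for every k. Fix a partition of {1,…,N} into 𝒢 and ℋ with |ℋ| = N − d, and let UB_tot = ∑_{g,g'∈𝒢} w_g R_{g,g'} w_{g'} + 2 · ∑_{h∈ℋ} |∑_{g∈𝒢} w_g R_{g,h}| + (N − d) · λ_max(R_{ℋℋ}). Then the objective f(w) = ∑_{k=1}^K 1/(wᵀ R_k w) satisfies f(w) ≥ K² / UB_tot. -/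
/-- The largest eigenvalue of a real square matrix, viewed as the supremum of the set of
eigenvalues of the associated linear endomorphism. -/
noncomputable def lamMax {n : Type*} [Fintype n] [DecidableEq n]
    (A : Matrix n n ℝ) : ℝ :=
  sSup {μ : ℝ | Module.End.HasEigenvalue (Matrix.toLin' A) μ}

/-! By the Cauchy–Schwarz inequality, `K² / ∑ₖ qₖ ≤ ∑ₖ 1 / qₖ` for positive `qₖ`, so only the total
power `∑ₖ wᵀ Rₖ w = wᵀ R w` has to be bounded from above. Split it along the partition `𝒢 ∪ ℋ`: the
`𝒢𝒢` block is known, each free sign contributes at most an absolute value to the cross term, and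
the Rayleigh quotient bounds the `ℋℋ` block by `λ_max(R_{ℋℋ}) ‖w_ℋ‖² = |ℋ| λ_max(R_{ℋℋ})`. -/

open Finset

open scoped MatrixOrder Matrix

theorem card_sq_div_le_sum_one_div {ι 𝕜 : Type*} [Field 𝕜] [LinearOrder 𝕜]
    [IsStrictOrderedRing 𝕜] {s : Finset ι} {q : ι → 𝕜} {b : 𝕜} (hs : s.Nonempty)
    (hq : ∀ i ∈ s, 0 < q i) (hb : ∑ i ∈ s, q i ≤ b) : (#s : 𝕜) ^ 2 / b ≤ ∑ i ∈ s, 1 / q i := by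
  have hsum : 0 < ∑ i ∈ s, q i := sum_pos hq hs
  calc (#s : 𝕜) ^ 2 / b ≤ (#s : 𝕜) ^ 2 / ∑ i ∈ s, q i := by gcongr
    _ ≤ ∑ i ∈ s, 1 / q i := by simpa using sq_sum_div_le_sum_sq_div s (fun _ ↦ (1 : 𝕜)) hq

theorem sum_sum_union_of_symm {ι M : Type*} [DecidableEq ι] [AddCommMonoid M] {s t : Finset ι}
    (hst : Disjoint s t) {f : ι → ι → M} (hf : ∀ i ∈ s, ∀ j ∈ t, f i j = f j i) :
    ∑ i ∈ s ∪ t, ∑ j ∈ s ∪ t, f i j =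
      ∑ i ∈ s, ∑ j ∈ s, f i j + 2 • ∑ j ∈ t, ∑ i ∈ s, f i j + ∑ i ∈ t, ∑ j ∈ t, f i j := by
  have hcross : ∑ i ∈ s, ∑ j ∈ t, f i j = ∑ j ∈ t, ∑ i ∈ s, f i j := sum_comm
  have hsymm : ∑ j ∈ t, ∑ i ∈ s, f j i = ∑ j ∈ t, ∑ i ∈ s, f i j :=
    sum_congr rfl fun j hj ↦ sum_congr rfl fun i hi ↦ (hf i hi j hj).symm
  simp only [sum_union hst, sum_add_distrib, hcross, hsymm, two_nsmul]
  abel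

theorem isHermitian_vecMulVec_star {n α : Type*} [Mul α] [StarMul α] (v : n → α) :
    (Matrix.vecMulVec v (star v)).IsHermitian := by
  rw [Matrix.IsHermitian, Matrix.conjTranspose_vecMulVec, star_star]

theorem isSymm_map_re_of_isHermitian {n 𝕜 : Type*} [RCLike 𝕜] {A : Matrix n n 𝕜}
    (hA : A.IsHermitian) : (A.map RCLike.re).IsSymm :=
  Matrix.IsSymm.ext fun i j ↦ by
    rw [Matrix.map_apply, Matrix.map_apply, ← hA.apply i j, RCLike.star_def, RCLike.conj_re]

theorem isSymm_sum {ι n M : Type*} [AddCommMonoid M] {s : Finset ι} {A : ι → Matrix n n M}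
    (hA : ∀ k ∈ s, (A k).IsSymm) : (∑ k ∈ s, A k).IsSymm :=
  (Matrix.transpose_sum s A).trans (sum_congr rfl hA)

section LargestEigenvalue

variable {n : Type*} [Fintype n] [DecidableEq n] {A : Matrix n n ℝ}

theorem le_lamMax_of_mem_spectrum {μ : ℝ} (hμ : μ ∈ spectrum ℝ A) : μ ≤ lamMax A := by
  rw [← Matrix.spectrum_toLin', ← Module.End.hasEigenvalue_iff_mem_spectrum] at hμ
  exact le_csSup (Module.End.finite_hasEigenvalue _).bddAbove hμ

theorem le_algebraMap_lamMax (hA : A.IsHermitian) : A ≤ algebraMap ℝ (Matrix n n ℝ) (lamMax A) :=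
  le_algebraMap_of_spectrum_le (fun _ ↦ le_lamMax_of_mem_spectrum) hA

theorem dotProduct_mulVec_le_lamMax_mul (hA : A.IsHermitian) (x : n → ℝ) :
    x ⬝ᵥ A *ᵥ x ≤ lamMax A * (x ⬝ᵥ x) := by
  have hpsd := (Matrix.le_iff.mp (le_algebraMap_lamMax hA)).dotProduct_mulVec_nonneg x
  rwa [star_trivial, Matrix.sub_mulVec, Algebra.algebraMap_eq_smul_one, Matrix.smul_mulVec,
    Matrix.one_mulVec, dotProduct_sub, dotProduct_smul, smul_eq_mul, sub_nonneg] at hpsd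

end LargestEigenvalue

section NodeBound

variable {n : Type*} [DecidableEq n] {A : Matrix n n ℝ}

theorem sum_sum_le_lamMax_submatrix_mul (hA : A.IsSymm) (w : n → ℝ) (H : Finset n) :
    ∑ i ∈ H, ∑ j ∈ H, w i * A i j * w j ≤
      lamMax (A.submatrix (fun i : H ↦ i.1) fun i : H ↦ i.1) * ∑ i ∈ H, w i ^ 2 := by
  have hherm : (A.submatrix (fun i : H ↦ i.1) fun i : H ↦ i.1).IsHermitian :=
    Matrix.isHermitian_iff_isSymm.mpr (hA.submatrix _)
  have hquad := dotProduct_mulVec_le_lamMax_mul hherm fun i ↦ w i.1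
  rw [Matrix.dot_mulVec_eq_sum_sum, sum_comm] at hquad
  simpa only [← sum_coe_sort H, Matrix.submatrix_apply, dotProduct, ← pow_two] using hquad

/-- The branch-and-bound quantity `UB_tot`: an upper bound for `wᵀ A w` over all choices of the free
signs `w i`, `i ∈ H`, given the fixed entries `w g`, `g ∈ G`. The paper's `N - d` is `#H`. -/
noncomputable def nodeUpperBound (A : Matrix n n ℝ) (w : n → ℝ) (G H : Finset n) : ℝ :=
  ∑ g ∈ G, ∑ g' ∈ G, w g * A g g' * w g' + 2 * ∑ i ∈ H, |∑ g ∈ G, w g * A g i| +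
    #H * lamMax (A.submatrix (fun i : H ↦ i.1) fun i : H ↦ i.1)

theorem sum_sum_union_le_nodeUpperBound (hA : A.IsSymm) {w : n → ℝ} {G H : Finset n}
    (hGH : Disjoint G H) (hw : ∀ i ∈ H, |w i| = 1) :
    ∑ i ∈ G ∪ H, ∑ j ∈ G ∪ H, w i * A i j * w j ≤ nodeUpperBound A w G H := by
  have hcross : ∑ i ∈ H, ∑ g ∈ G, w g * A g i * w i ≤ ∑ i ∈ H, |∑ g ∈ G, w g * A g i| :=
    sum_le_sum fun i hi ↦ by
      rw [← sum_mul]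
      exact (le_abs_self _).trans_eq (by rw [abs_mul, hw i hi, mul_one])
  have hnorm : ∑ i ∈ H, w i ^ 2 = #H := by
    simpa using sum_congr rfl fun i hi ↦ show w i ^ 2 = 1 by rw [← sq_abs, hw i hi, one_pow]
  have hfree := sum_sum_le_lamMax_submatrix_mul hA w H
  rw [hnorm, mul_comm] at hfree
  rw [sum_sum_union_of_symm hGH fun i _ j _ ↦ by rw [hA.apply]; ring, nsmul_eq_mul,
    Nat.cast_ofNat, nodeUpperBound]
  gcongr

end NodeBound

theorem stmt_6_general {n κ : Type*} [Fintype n] [DecidableEq n] [Fintype κ]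
    [Nonempty κ] {R : κ → Matrix n n ℝ} (hR : (∑ k, R k).IsSymm) {w : n → ℝ}
    (hpos : ∀ k, 0 < ∑ i, ∑ j, w i * R k i j * w j) {G H : Finset n} (hGH : Disjoint G H)
    (hcover : G ∪ H = univ) (hw : ∀ i ∈ H, |w i| = 1) :
    (Fintype.card κ : ℝ) ^ 2 / nodeUpperBound (∑ k, R k) w G H ≤
      ∑ k, 1 / ∑ i, ∑ j, w i * R k i j * w j := by
  refine card_sq_div_le_sum_one_div univ_nonempty (fun k _ ↦ hpos k) ?_
  calc ∑ k, ∑ i, ∑ j, w i * R k i j * w j = ∑ i, ∑ j, w i * (∑ k, R k) i j * w j := by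
        simp only [Matrix.sum_apply, mul_sum, sum_mul]
        rw [sum_comm]
        exact sum_congr rfl fun i _ ↦ sum_comm
    _ ≤ nodeUpperBound (∑ k, R k) w G H := by
        simpa only [hcover] using sum_sum_union_le_nodeUpperBound hR hGH hw

/-- With `R_k = Re(h_k h_kᴴ)`, `R = ∑_k R_k`, a `±1` beamformer `w`
satisfying `wᵀR_k w > 0` for all `k`, a partition of the indices into the fixed set `𝒢`
(of size `d`) and the free set `ℋ`, and the branch-and-bound upper bound
`UB_tot = C_tot + 2∑_{h∈ℋ}|∑_{g∈𝒢} w_g R_{g,h}| + (N−d)λ_max(R_{ℋℋ})`, the objective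
`f(w) = ∑_k 1/(wᵀR_k w)` satisfies `f(w) ≥ K²/UB_tot`. -/
theorem stmt_6 (N K d : ℕ) (hK : 1 ≤ K)
    (h : Fin K → Fin N → ℂ)
    (R : Fin K → Matrix (Fin N) (Fin N) ℝ)
    (hRk : ∀ k, R k = Matrix.of fun i j => (h k i * star (h k j)).re)
    (Rs : Matrix (Fin N) (Fin N) ℝ) (hRs : Rs = ∑ k, R k)
    (w : Fin N → ℝ) (hw : ∀ n, w n = 1 ∨ w n = -1)
    (hpos : ∀ k, 0 < ∑ i, ∑ j, w i * R k i j * w j)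
    (G H : Finset (Fin N)) (hdisj : Disjoint G H) (hcover : G ∪ H = Finset.univ)
    (hcardG : G.card = d)
    (UBtot : ℝ)
    (hUB : UBtot = (∑ g ∈ G, ∑ g' ∈ G, w g * Rs g g' * w g') +
        2 * ∑ i ∈ H, |∑ g ∈ G, w g * Rs g i| +
        ((N : ℝ) - d) * lamMax (Rs.submatrix (fun i : ↥H => i.1) (fun i : ↥H => i.1))) :
    ∑ k, 1 / (∑ i, ∑ j, w i * R k i j * w j) ≥ (K : ℝ) ^ 2 / UBtot := by
  have : Nonempty (Fin K) := ⟨0, hK⟩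
  have hsymm : (∑ k, R k).IsSymm := isSymm_sum fun k _ ↦ by
    rw [hRk]
    exact isSymm_map_re_of_isHermitian (isHermitian_vecMulVec_star (h k))
  have hcardH : (N : ℝ) - d = #H := by
    have hcard : N = d + #H := by simpa [hcover, hcardG] using card_union_of_disjoint hdisj
    exact sub_eq_of_eq_add' (mod_cast hcard)
  have hsign : ∀ i ∈ H, |w i| = 1 := fun i _ ↦ (abs_eq zero_le_one).mpr (hw i)
  have hnode : UBtot = nodeUpperBound (∑ k, R k) w G H := by
    rw [hUB, hRs, hcardH, nodeUpperBound]
  simpa only [hnode, Fintype.card_fin] using stmt_6_general hsymm hpos hdisj hcover hsign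
end
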